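/- arXiv:2312.06314 — 5 statements merged into one kernel-verified Lean document; each statement's English description precedes it below -/
import Mathlib

section
/- Let G be a simple graph, let w be a walk in G from u to v, and let S be a finite set of vertices each lying on w (S is contained in the support of w). Then there exists a duplicate-free list (t_1,…,t_k) enumerating exactly the elements of S such that the length of w is at least dist(u,t_1) + Σ_{j=1}^{k−1} dist(t_j,t_{j+1}) + dist(t_k,v) (and at least dist(u,v) when S is empty). -/
/-- The chained distance `dist(u, t₁) + Σ_{j} dist(t_j, t_{j+1}) + dist(t_k, v)`
through a list of intermediate vertices, equal to `dist(u, v)` when the list is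
empty.  This is the cost of the Hamiltonian path `u, t₁, …, t_k, v` in the
metric closure (target graph) of `G`. -/
noncomputable def chainedDist {V : Type*} (G : SimpleGraph V) : V → List V → V → ℕ
  | u, [], v => G.dist u v
  | u, t :: ts, v => G.dist u t + chainedDist G t ts v

/-- Moving the start of a target sequence across an edge increases its cost by at most one. -/
theorem chainedDist_le_succ_of_adj {V : Type*} {G : SimpleGraph V} {u x : V}
    (h : G.Adj u x) (l : List V) (v : V) :
    chainedDist G u l v ≤ chainedDist G x l v + 1 := by
  have key (t : V) : G.dist u t ≤ G.dist x t + 1 := by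
    have := h.reachable.dist_triangle_left t
    rw [SimpleGraph.dist_eq_one_iff_adj.mpr h] at this
    omega
  cases l with
  | nil => exact key v
  | cons t ts =>
    have := key t
    simp only [chainedDist]
    omega

/-- If a walk `w` from `u` to `v` visits every vertex of a finite set `S`,
then there is a duplicate-free list enumerating exactly the elements of `S`
whose chained distance from `u` to `v` is at most the length of `w`. -/
theorem exists_enumeration_chainedDist_le_walk_length
    {V : Type*} [DecidableEq V] (G : SimpleGraph V)
    {u v : V} (w : G.Walk u v) (S : Finset V)
    (hS : ∀ x ∈ S, x ∈ w.support) :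
    ∃ l : List V, l.Nodup ∧ (∀ x, x ∈ l ↔ x ∈ S) ∧
      chainedDist G u l v ≤ w.length := by
  induction w generalizing S with
  | @nil u =>
    have hS' : ∀ x ∈ S, x = u := by simpa using hS
    refine ⟨S.toList, S.nodup_toList, fun x => Finset.mem_toList, ?_⟩
    rcases Finset.subset_singleton_iff.mp (fun x hx => Finset.mem_singleton.mpr (hS' x hx))
      with rfl | rfl <;> simp [chainedDist]
  | @cons u x v h p ih =>
    obtain ⟨l, hnd, hmem, hle⟩ := ih (S.erase u) fun y hy => by
      have := hS y (Finset.mem_of_mem_erase hy)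
      rw [SimpleGraph.Walk.support_cons, List.mem_cons] at this
      exact this.resolve_left (Finset.ne_of_mem_erase hy)
    have hstep := chainedDist_le_succ_of_adj h l v
    rw [SimpleGraph.Walk.length_cons]
    by_cases hu : u ∈ S
    · refine ⟨u :: l, List.nodup_cons.mpr ⟨by simp [hmem], hnd⟩, fun y => ?_, ?_⟩
      · by_cases hy : y = u <;> simp [hmem, hy, hu]
      · simp only [chainedDist, SimpleGraph.dist_self]
        omega
    · exact ⟨l, hnd, by simpa [Finset.erase_eq_of_notMem hu] using hmem, by omega⟩
end

section
/- Let G be a simple graph, let w be a walk in G from u to v, and let S be a finite set of vertices each lying on w (S is contained in the support of w). Then the length of w is at least the minimum, over all duplicate-free lists (t_1,…,t_k) enumerating exactly the elements of S, of the chained distance dist(u,t_1) + Σ_{j=1}^{k−1} dist(t_j,t_{j+1}) + dist(t_k,v). In other words, the optimal Hamiltonian-path cost from u through S to v in the metric closure of G is an admissible (never overestimating) lower bound on the cost of any walk from u to v that visits all of S. -/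
/-- Moving the first endpoint along an edge changes the distance by at most one, even when the
second endpoint is unreachable. -/
theorem SimpleGraph.Adj.dist_le_one_add_dist {V : Type*} {G : SimpleGraph V} {a b : V}
    (h : G.Adj a b) (x : V) : G.dist a x ≤ 1 + G.dist b x := by
  by_cases hr : G.Reachable b x
  · obtain ⟨p, hp⟩ := hr.exists_walk_length_eq_dist
    have := SimpleGraph.dist_le (SimpleGraph.Walk.cons h p)
    rw [SimpleGraph.Walk.length_cons] at this
    omega
  · have : ¬ G.Reachable a x := fun hax => hr (h.symm.reachable.trans hax)
    simp [SimpleGraph.dist_eq_zero_of_not_reachable this]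

theorem SimpleGraph.Adj.chainedDist_le_one_add {V : Type*} {G : SimpleGraph V} {a b : V}
    (h : G.Adj a b) (l : List V) (v : V) :
    chainedDist G a l v ≤ 1 + chainedDist G b l v := by
  cases l with
  | nil => exact h.dist_le_one_add_dist v
  | cons t ts =>
    have := h.dist_le_one_add_dist t
    simp only [chainedDist]
    omega

/-- A finite set of vertices on a walk can be enumerated, without repetition, by a list whose
chained distance is at most the length of the walk. -/
theorem exists_nodup_chainedDist_le_walk_length {V : Type*} [DecidableEq V] {G : SimpleGraph V}
    {u v : V} (w : G.Walk u v) (S : Finset V) (hS : ∀ x ∈ S, x ∈ w.support) :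
    ∃ l : List V, l.Nodup ∧ (∀ x, x ∈ l ↔ x ∈ S) ∧ chainedDist G u l v ≤ w.length := by
  induction w generalizing S with
  | @nil u =>
    have hsub : S ⊆ {u} := fun x hx => by simpa using hS x hx
    rcases Finset.subset_singleton_iff.mp hsub with rfl | rfl
    · exact ⟨[], by simp, by simp, by simp [chainedDist]⟩
    · exact ⟨[u], by simp, by simp, by simp [chainedDist]⟩
  | @cons u b v h p ih =>
    obtain ⟨l, hnd, hmem, hle⟩ := ih (S.erase u) fun x hx => by
      have := hS x (Finset.mem_of_mem_erase hx)
      simpa [Finset.ne_of_mem_erase hx] using this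
    have hstep := h.chainedDist_le_one_add l v
    rw [SimpleGraph.Walk.length_cons]
    by_cases hu : u ∈ S
    · refine ⟨u :: l, List.nodup_cons.mpr ⟨by simp [hmem], hnd⟩, fun x => ?_, ?_⟩
      · by_cases hx : x = u <;> simp [hmem, hx, hu]
      · simp only [chainedDist, SimpleGraph.dist_self]
        omega
    · rw [Finset.erase_eq_of_notMem hu] at hmem
      exact ⟨l, hnd, hmem, by omega⟩

/-- If a walk `w` from `u` to `v` visits every vertex of a finite set `S`, then
the length of `w` is at least the minimum, over all duplicate-free lists
enumerating exactly the elements of `S`, of the chained distance from `u`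
through the list to `v`: the optimal Hamiltonian-path cost in the metric
closure of `G` is an admissible lower bound. -/
theorem sInf_chainedDist_le_walk_length
    {V : Type*} [DecidableEq V] (G : SimpleGraph V)
    {u v : V} (w : G.Walk u v) (S : Finset V)
    (hS : ∀ x ∈ S, x ∈ w.support) :
    sInf {n : ℕ | ∃ l : List V, l.Nodup ∧ (∀ x, x ∈ l ↔ x ∈ S) ∧
        n = chainedDist G u l v} ≤ w.length := by
  obtain ⟨l, hnd, hmem, hle⟩ := exists_nodup_chainedDist_le_walk_length w S hS
  exact le_trans (Nat.sInf_le ⟨l, hnd, hmem, rfl⟩) hle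
end

section
/- (Admissibility of the min-sum MHPP heuristic.) Let G be a connected finite simple graph with unit edge costs, let there be N agents with start vertices o_1,…,o_N, a goal set V_d of vertices, M target vertices t_1,…,t_M, and eligibility sets f_A(v) ⊆ {1,…,N} for each vertex v. Suppose for each agent i there is a walk w_i in G from o_i to δ(i), where δ is an injective goal assignment with δ(i) ∈ V_d and i ∈ f_A(δ(i)), and suppose every target is covered: for each m there exists an agent i ∈ f_A(t_m) with t_m on the walk w_i. Then the sum Σ_i length(w_i) is at least the minimum, over all target assignments ψ : {1,…,M} → {1,…,N} with ψ(m) ∈ f_A(t_m), all injective goal assignments δ' with δ'(i) ∈ V_d and i ∈ f_A(δ'(i)), and all orderings (duplicate-free lists) σ_i enumerating ψ^{-1}(i) for each agent i, of Σ_i [the chained distance from o_i through σ_i to δ'(i)]. -/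
namespace SimpleGraph

variable {V : Type*} {G : SimpleGraph V}

/-- Triangle inequality for the chained distance in its start vertex. -/
theorem Connected.chainedDist_le_dist_add (hconn : G.Connected) (u u' v : V) (l : List V) :
    chainedDist G u l v ≤ G.dist u u' + chainedDist G u' l v := by
  cases l with
  | nil => exact hconn.dist_triangle
  | cons t ts =>
    have h : G.dist u t ≤ G.dist u u' + G.dist u' t := hconn.dist_triangle
    simp only [chainedDist]
    omega

/-- The chained distance through vertices met in order along a walk is at most its length. -/
theorem Connected.chainedDist_le_length (hconn : G.Connected) {u v : V} (p : G.Walk u v)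
    {l : List V} (hl : l.Sublist p.support) : chainedDist G u l v ≤ p.length := by
  induction p generalizing l with
  | nil =>
    rw [Walk.support_nil, List.sublist_singleton] at hl
    rcases hl with rfl | rfl <;> simp [chainedDist]
  | @cons a b c h p ih =>
    have key : ∀ l' : List V, l'.Sublist p.support →
        chainedDist G a l' c ≤ p.length + 1 := fun l' hl' => by
      have htri := hconn.chainedDist_le_dist_add a b c l'
      have hdist : G.dist a b = 1 := dist_eq_one_iff_adj.mpr h
      have := ih hl'
      omega
    rw [Walk.support_cons, List.sublist_cons_iff] at hl
    rw [Walk.length_cons]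
    rcases hl with hl | ⟨l', rfl, hl⟩
    · exact key l hl
    · simpa [chainedDist] using key l' hl

end SimpleGraph

/-- Admissibility of the min-sum MHPP heuristic: for any feasible set of
covering walks (one per agent, to distinct eligible goals, collectively
visiting every target via an eligible agent), the sum `Σ_i length(w_i)` is
bounded below by the optimal min-sum multi-agent Hamiltonian path value over
all eligible target assignments, injective eligible goal assignments, and
orderings of each agent's assigned targets. -/
theorem minsum_mhpp_admissible
    {V : Type*} [Fintype V] [DecidableEq V] (G : SimpleGraph V)
    (hconn : G.Connected) (N M : ℕ)
    (o : Fin N → V) (Vd : Set V) (t : Fin M → V) (fA : V → Set (Fin N))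
    (δ : Fin N → V) (hδinj : Function.Injective δ)
    (hδ : ∀ i, δ i ∈ Vd ∧ i ∈ fA (δ i))
    (w : ∀ i : Fin N, G.Walk (o i) (δ i))
    (hcover : ∀ m : Fin M, ∃ i : Fin N, i ∈ fA (t m) ∧ t m ∈ (w i).support) :
    sInf {n : ℕ | ∃ (ψ : Fin M → Fin N) (δ' : Fin N → V) (σ : Fin N → List V),
        (∀ m, ψ m ∈ fA (t m)) ∧
        Function.Injective δ' ∧ (∀ i, δ' i ∈ Vd ∧ i ∈ fA (δ' i)) ∧
        (∀ i, (σ i).Nodup ∧ (∀ x, x ∈ σ i ↔ ∃ m, ψ m = i ∧ t m = x)) ∧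
        n = ∑ i, chainedDist G (o i) (σ i) (δ' i)} ≤
      ∑ i, (w i).length := by
  classical
  choose ψ hψ hmem using hcover
  let σ : Fin N → List V := fun i =>
    (w i).support.dedup.filter fun x => ∃ m, ψ m = i ∧ t m = x
  refine le_trans (Nat.sInf_le ?_)
    (Finset.sum_le_sum fun i _ => hconn.chainedDist_le_length (l := σ i) (w i) ?_)
  · refine ⟨ψ, δ, σ, hψ, hδinj, hδ, fun i => ⟨(List.nodup_dedup _).filter _, fun x => ?_⟩, rfl⟩
    simp only [σ, List.mem_filter, List.mem_dedup, decide_eq_true_eq, and_iff_right_iff_imp]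
    rintro ⟨m, rfl, rfl⟩
    exact hmem m
  · exact List.filter_sublist.trans (List.dedup_sublist _)
end

section
/- (Shortening lemma for conflict-free joint solutions.) Let p be a solution of an MCPF instance with makespan T, and for each time k ≤ T let visited(k) = { m : there exist k' ≤ k and an agent i ∈ f_A(t_m) with p(k',i) = t_m } be the set of targets covered by time k. If there are times 0 ≤ s < u ≤ T with p(s,i) = p(u,i) for every agent i and visited(s) = visited(u), then the map q defined by q(k,i) = p(k,i) for k ≤ s and q(k,i) = p(k + (u − s), i) for s < k ≤ T − (u − s) is a solution of the same instance with makespan T − (u − s). -/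
/-- An MCPF instance: a connected finite simple graph with unit edge costs,
`N` agents with pairwise distinct start vertices, a goal set, `M` target
vertices, and eligibility sets for each vertex. -/
structure MCPF (V : Type*) [Fintype V] (N M : ℕ) where
  G : SimpleGraph V
  conn : G.Connected
  o : Fin N → V
  o_inj : Function.Injective o
  Vd : Set V
  t : Fin M → V
  fA : V → Set (Fin N)

/-- `p` (read on times `0, …, T`) is a solution of makespan `T` of the MCPF
instance `P`: agents start at their starts, each step waits or moves along an
edge, there are no vertex conflicts and no edge (swap) conflicts, agents end
at distinct eligible goals, and every target is visited by an eligible agent. -/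
def MCPF.IsSolution {V : Type*} [Fintype V] {N M : ℕ} (P : MCPF V N M)
    (T : ℕ) (p : ℕ → Fin N → V) : Prop :=
  (∀ i, p 0 i = P.o i) ∧
  (∀ k < T, ∀ i, p (k + 1) i = p k i ∨ P.G.Adj (p k i) (p (k + 1) i)) ∧
  (∀ k ≤ T, Function.Injective (p k)) ∧
  (∀ k < T, ∀ i j : Fin N, i ≠ j →
    ¬(p (k + 1) i = p k j ∧ p (k + 1) j = p k i)) ∧
  (∃ δ : Fin N → V, Function.Injective δ ∧
    ∀ i, δ i ∈ P.Vd ∧ i ∈ P.fA (δ i) ∧ p T i = δ i) ∧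
  (∀ m : Fin M, ∃ k ≤ T, ∃ i, i ∈ P.fA (P.t m) ∧ p k i = P.t m)

/-- Shortening lemma: if a solution `p` of makespan `T` repeats a joint vertex
at times `s < u ≤ T` with the same set of targets already covered, then cutting
out the segment between `s` and `u` yields a solution of makespan `T - (u - s)`. -/
theorem mcpf_shortening {V : Type*} [Fintype V] {N M : ℕ} (P : MCPF V N M)
    {T : ℕ} {p : ℕ → Fin N → V} (hp : P.IsSolution T p)
    {s u : ℕ} (hsu : s < u) (huT : u ≤ T)
    (hrepeat : ∀ i, p s i = p u i)
    (hvisited :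
      {m : Fin M | ∃ k ≤ s, ∃ i, i ∈ P.fA (P.t m) ∧ p k i = P.t m} =
      {m : Fin M | ∃ k ≤ u, ∃ i, i ∈ P.fA (P.t m) ∧ p k i = P.t m}) :
    P.IsSolution (T - (u - s))
      (fun k i => if k ≤ s then p k i else p (k + (u - s)) i) := by
  obtain ⟨d, rfl⟩ := Nat.exists_eq_add_of_lt hsu
  obtain ⟨e, rfl⟩ := Nat.exists_eq_add_of_le huT
  rw [show s + d + 1 - s = d + 1 by omega,
    show s + d + 1 + e - (d + 1) = s + e by omega]
  set q : ℕ → Fin N → V := fun k i => if k ≤ s then p k i else p (k + (d + 1)) i with hq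
  have q_before : ∀ k ≤ s, q k = p k := fun k hk => by
    funext i
    simp [hq, hk]
  have q_after : ∀ k, s ≤ k → q k = p (k + (d + 1)) := fun k hk => by
    funext i
    rcases hk.eq_or_lt with rfl | hlt
    · simpa [hq, add_assoc] using hrepeat i
    · simp [hq, hlt.not_ge]
  -- Every step of `q` is a step of `p`.
  have q_step : ∀ k < s + e, ∃ l < s + d + 1 + e, q k = p l ∧ q (k + 1) = p (l + 1) := by
    intro k hk
    rcases lt_or_ge k s with h | h
    · exact ⟨k, by omega, q_before k h.le, q_before (k + 1) h⟩
    · refine ⟨k + (d + 1), by omega, q_after k h, ?_⟩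
      rw [q_after (k + 1) (by omega), show k + 1 + (d + 1) = k + (d + 1) + 1 by omega]
  obtain ⟨hstart, hmove, hinj, hswap, ⟨δ, hδ, hgoal⟩, htarget⟩ := hp
  refine ⟨?_, ?_, ?_, ?_, ⟨δ, hδ, ?_⟩, ?_⟩
  · rwa [q_before 0 s.zero_le]
  · intro k hk
    obtain ⟨l, hl, h, h'⟩ := q_step k hk
    rw [h, h']
    exact hmove l hl
  · intro k hk
    rcases le_total k s with h | h
    · rw [q_before k h]
      exact hinj k (by omega)
    · rw [q_after k h]
      exact hinj _ (by omega)
  · intro k hk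
    obtain ⟨l, hl, h, h'⟩ := q_step k hk
    rw [h, h']
    exact hswap l hl
  · rwa [q_after (s + e) (by omega), show s + e + (d + 1) = s + d + 1 + e by omega]
  · intro m
    obtain ⟨k, hk, i, hi, hki⟩ := htarget m
    rcases le_total k (s + d + 1) with h | h
    · obtain ⟨l, hl, j, hj, hlj⟩ := hvisited.ge ⟨k, h, i, hi, hki⟩
      exact ⟨l, by omega, j, hj, by rwa [q_before l hl]⟩
    · refine ⟨k - (d + 1), by omega, i, hi, ?_⟩
      rwa [q_after _ (by omega), Nat.sub_add_cancel (by omega)]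
end

section
/- (Finite solution-length bound underlying completeness.) Consider an MCPF instance on a graph with vertex set V, with N agents and M targets. If the instance admits a solution of some makespan, then it admits a solution of makespan at most |V|^N · 2^M − 1. -/
open Classical in
/-- The targets visited by an eligible agent up to and including time `k`. -/
noncomputable def MCPF.visited {V : Type*} [Fintype V] {N M : ℕ} (P : MCPF V N M)
    (p : ℕ → Fin N → V) (k : ℕ) : Finset (Fin M) :=
  {m | ∃ l ≤ k, ∃ i, i ∈ P.fA (P.t m) ∧ p l i = P.t m}

theorem MCPF.mem_visited {V : Type*} [Fintype V] {N M : ℕ} {P : MCPF V N M}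
    {p : ℕ → Fin N → V} {k : ℕ} {m : Fin M} :
    m ∈ P.visited p k ↔ ∃ l ≤ k, ∃ i, i ∈ P.fA (P.t m) ∧ p l i = P.t m := by
  simp [MCPF.visited]

/-- Cutting out the segment between two times with the same joint vertex and the same
visited targets leaves a solution. -/
theorem MCPF.IsSolution.cut {V : Type*} [Fintype V] {N M : ℕ} {P : MCPF V N M}
    {T a b : ℕ} {p : ℕ → Fin N → V} (h : P.IsSolution T p) (hab : a ≤ b) (hbT : b ≤ T)
    (hp : p a = p b) (hv : P.visited p a = P.visited p b) :
    P.IsSolution (T - (b - a)) (fun k => if k ≤ a then p k else p (k + (b - a))) := by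
  obtain ⟨hstart, hstep, hinj, hswap, ⟨δ, hδ, hgoal⟩, htarget⟩ := h
  set q : ℕ → Fin N → V := fun k => if k ≤ a then p k else p (k + (b - a))
  have q_le {k : ℕ} (hk : k ≤ a) : q k = p k := if_pos hk
  have q_ge {k : ℕ} (hk : a ≤ k) : q k = p (k + (b - a)) := by
    rcases hk.eq_or_lt with rfl | hk
    · rw [q_le le_rfl, hp]
      congr 1
      omega
    · exact if_neg (by omega)
  have q_step (k : ℕ) (hk : k < T - (b - a)) :
      ∃ l < T, q k = p l ∧ q (k + 1) = p (l + 1) := by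
    rcases lt_or_ge k a with hka | hka
    · exact ⟨k, by omega, q_le hka.le, q_le hka⟩
    · refine ⟨k + (b - a), by omega, q_ge hka, ?_⟩
      rw [q_ge (by omega)]
      congr 1
      omega
  refine ⟨fun i => ?_, fun k hk => ?_, fun k hk => ?_, fun k hk => ?_,
    ⟨δ, hδ, fun i => ?_⟩, fun m => ?_⟩
  · rw [q_le (Nat.zero_le a), hstart]
  · obtain ⟨l, hl, h₀, h₁⟩ := q_step k hk
    rw [h₀, h₁]
    exact hstep l hl
  · rcases le_total k a with hka | hka
    · rw [q_le hka]
      exact hinj k (by omega)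
    · rw [q_ge hka]
      exact hinj _ (by omega)
  · obtain ⟨l, hl, h₀, h₁⟩ := q_step k hk
    rw [h₀, h₁]
    exact hswap l hl
  · rw [q_ge (by omega), Nat.sub_add_cancel (by omega)]
    exact hgoal i
  · obtain ⟨k, hk, i, hi, hki⟩ := htarget m
    rcases le_total k b with hkb | hkb
    · have hm : m ∈ P.visited p a := by
        rw [hv]
        exact MCPF.mem_visited.mpr ⟨k, hkb, i, hi, hki⟩
      obtain ⟨l, hl, j, hj, hlj⟩ := MCPF.mem_visited.mp hm
      exact ⟨l, by omega, j, hj, by rw [q_le hl, hlj]⟩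
    · refine ⟨k - (b - a), by omega, i, hi, ?_⟩
      rw [q_ge (by omega), Nat.sub_add_cancel (by omega), hki]

/-- Finite solution-length bound underlying completeness: if an MCPF instance
admits a solution of some makespan, then it admits a solution of makespan at
most `|V|^N * 2^M - 1`. -/
theorem mcpf_exists_short_solution {V : Type*} [Fintype V] {N M : ℕ}
    (P : MCPF V N M)
    (h : ∃ (T : ℕ) (p : ℕ → Fin N → V), P.IsSolution T p) :
    ∃ (T : ℕ) (p : ℕ → Fin N → V), P.IsSolution T p ∧
      T ≤ Fintype.card V ^ N * 2 ^ M - 1 := by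
  classical
  obtain ⟨p, hp⟩ := Nat.find_spec h
  refine ⟨Nat.find h, p, hp, ?_⟩
  set T := Nat.find h
  let state : Fin (T + 1) → (Fin N → V) × Finset (Fin M) := fun k => (p k, P.visited p k)
  have hstate : Function.Injective state := by
    refine Function.Injective.of_lt_imp_ne fun a b hab heq => ?_
    obtain ⟨hpos, hvis⟩ := Prod.mk.inj heq
    have hab : (a : ℕ) < b := hab
    have hb : (b : ℕ) < T + 1 := b.isLt
    exact Nat.find_min h (m := T - (b - a)) (by omega)
      ⟨_, hp.cut hab.le (by omega) hpos hvis⟩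
  have hcard := Fintype.card_le_of_injective state hstate
  simp only [Fintype.card_fin, Fintype.card_prod, Fintype.card_fun, Fintype.card_finset] at hcard
  omega
end
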